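/- arXiv:2306.03943 — 4 statements merged into one kernel-verified Lean document; each statement's English description precedes it below -/
import Mathlib

section
/- (Fort's theorem, cited as Theorem 2.5.) The Hilbert cube is ω-homogeneous: for any two countable dense subsets S and T of the Hilbert cube 𝒰, there exists a homeomorphism h : 𝒰 → 𝒰 such that h(S) = T. -/
/-!
The proof reduces to countable dense sets in general position, for which a homeomorphism of a very
special form can be constructed by a back-and-forth argument.

*General position* means that the points lie in `(0,1)^ℕ` and have pairwise distinct first
coordinates. The homeomorphism group of the cube, embedded in `C(𝒰, 𝒰) × C(𝒰, 𝒰)` by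
`h ↦ (h, h⁻¹)`, is a Baire space, and a generic homeomorphism puts a given countable set in general
position (`exists_generalPosition`). The essential point is that any `x` can be moved off the face
`xᵢ ∈ {0, 1}` by a homeomorphism close to the identity (`exists_push`): in the square formed by the
coordinates `i` and `j`, with `j` so large that the coordinate `j` may be changed at will, `x` is
first brought near a corner, and then slid around the corner by a small norm-preserving shear.
Once `x` has first coordinate in `(0,1)`, the maps `z₀ ↦ z₀ ^ exp (t zₖ)` separate it from other
points (`exists_separate`).

If `S` and `T` are in general position, a homeomorphism of the form
`z ↦ (f z₀, z₁ ^ exp (c₀ z₀), z₂ ^ exp (c₁ z₀), …)` maps `S` onto `T`, with `f` an increasing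
bijection of `[0,1]` and `cᵢ` continuous real functions on `[0,1]`. Any such map is a
homeomorphism by compactness. By `exists_extension`, `f` is determined by an
order-preserving matching of the first coordinates of `S` and `T`, and `z ^ exp c = w` amounts to
`c = logLog w - logLog z`, so that `cᵢ` has prescribed values at the first coordinates of `S`. The
matching is built one pair at a time together with continuous functions interpolating the values
prescribed so far (`Approx`); as only the first `n` of these need to change little at stage `n`, the
conditions on the partner of a given point are open, and density provides one. The functions
converge uniformly, and their limits are the `cᵢ` (`exists_matching`).
-/

/-- The Hilbert cube `𝒰 = [0,1]^ℕ` with the product topology. -/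
abbrev HilbertCube : Type := ℕ → unitInterval

open Set Filter Topology unitInterval

/-! ### Power maps of the unit interval -/

/-- The homeomorphism `x ↦ x ^ exp c` of `[0,1]`. In the coordinate `logLog` on `(0,1)` it is the
translation by `c`. -/
noncomputable def powI (x : I) (c : ℝ) : I :=
  ⟨(x : ℝ) ^ Real.exp c, Real.rpow_nonneg x.2.1 _, Real.rpow_le_one x.2.1 x.2.2 (Real.exp_pos c).le⟩

lemma powI_powI_neg (x : I) (c : ℝ) : powI (powI x c) (-c) = x := by
  ext
  simp only [powI]
  rw [← Real.rpow_mul x.2.1, ← Real.exp_add]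
  simp

lemma powI_neg_powI (x : I) (c : ℝ) : powI (powI x (-c)) c = x := by
  simpa using powI_powI_neg x (-c)

lemma continuous_powI : Continuous fun p : I × ℝ => powI p.1 p.2 := by
  refine Continuous.subtype_mk ?_ _
  exact (by fun_prop : Continuous fun p : I × ℝ => (p.1 : ℝ)).rpow (by fun_prop)
    fun p => Or.inr (Real.exp_pos _)

lemma Continuous.powI {X : Type*} [TopologicalSpace X] {f : X → I} {c : X → ℝ}
    (hf : Continuous f) (hc : Continuous c) : Continuous fun x => powI (f x) (c x) :=
  continuous_powI.comp (hf.prodMk hc)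

/-- The coordinate `x ↦ log (-log x)`, an (orientation reversing) homeomorphism from `(0,1)` to
`ℝ`; its values at the endpoints are junk. -/
noncomputable def logLog (x : I) : ℝ := Real.log (-Real.log x)

lemma logLog_powI {x : I} (h0 : 0 < (x : ℝ)) (h1 : (x : ℝ) < 1) (c : ℝ) :
    logLog (powI x c) = c + logLog x := by
  have := Real.log_neg h0 h1
  simp only [logLog, powI]
  rw [Real.log_rpow h0, ← mul_neg, Real.log_mul (Real.exp_pos c).ne' (by linarith), Real.log_exp]

lemma powI_pos {x : I} (h0 : 0 < (x : ℝ)) (c : ℝ) : 0 < (powI x c : ℝ) := Real.rpow_pos_of_pos h0 _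

lemma powI_lt_one {x : I} (h1 : (x : ℝ) < 1) (c : ℝ) : (powI x c : ℝ) < 1 :=
  Real.rpow_lt_one x.2.1 h1 (Real.exp_pos c)

lemma powI_logLog_sub {x y : I} (hx0 : 0 < (x : ℝ)) (hx1 : (x : ℝ) < 1) (hy0 : 0 < (y : ℝ))
    (hy1 : (y : ℝ) < 1) : powI x (logLog y - logLog x) = y := by
  have h1 := Real.log_neg hx0 hx1
  have h2 := Real.log_neg hy0 hy1
  ext
  simp only [logLog, powI]
  rw [Real.exp_sub, Real.exp_log (by linarith), Real.exp_log (by linarith),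
    Real.rpow_def_of_pos hx0, show Real.log x * (-Real.log y / -Real.log x) = Real.log y by
      rw [neg_div_neg_eq]; field_simp [h1.ne], Real.exp_log hy0]

lemma continuousAt_logLog {x : I} (h0 : 0 < (x : ℝ)) (h1 : (x : ℝ) < 1) :
    ContinuousAt logLog x := by
  have := Real.log_neg h0 h1
  unfold logLog
  exact ((continuous_subtype_val.continuousAt.log h0.ne').neg).log (neg_pos.2 this).ne'

lemma powI_injective {x : I} (h0 : 0 < (x : ℝ)) (h1 : (x : ℝ) < 1) :
    Function.Injective (powI x) := fun c d h => by
  have := congrArg logLog h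
  rw [logLog_powI h0 h1, logLog_powI h0 h1] at this
  linarith

lemma abs_powI_sub_le (x : I) {c : ℝ} (hc : 0 ≤ c) : |(powI x c : ℝ) - x| ≤ Real.exp c - 1 := by
  have he : 1 ≤ Real.exp c := Real.one_le_exp hc
  rcases x.2.1.eq_or_lt with h0 | h0
  · simp only [powI, ← h0]
    rw [Real.zero_rpow (Real.exp_pos c).ne']
    simpa
  have hle : (powI x c : ℝ) ≤ x := by
    simpa [powI] using Real.rpow_le_rpow_of_exponent_ge h0 x.2.2 he
  rw [abs_of_nonpos (by linarith)]
  have e1 : (powI x c : ℝ) = x * Real.exp (Real.log x * (Real.exp c - 1)) := by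
    simp only [powI]
    rw [← Real.rpow_def_of_pos h0, Real.rpow_sub h0, Real.rpow_one]
    field_simp
  have e2 := Real.add_one_le_exp (Real.log x * (Real.exp c - 1))
  have e3 : 1 - (x : ℝ)⁻¹ ≤ Real.log x := Real.one_sub_inv_le_log_of_pos h0
  have e4 : (x : ℝ) - 1 ≤ x * Real.log x := by
    have := mul_le_mul_of_nonneg_left e3 h0.le
    rwa [mul_sub, mul_one, mul_inv_cancel₀ h0.ne'] at this
  have e5 := mul_le_mul_of_nonneg_left e2 h0.le
  rw [← e1] at e5
  nlinarith [x.2.1]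

/-! ### Small homeomorphisms of a square -/

/-- The linear shear `(a, b) ↦ (a + t b, b)` rescaled so as to preserve the sup norm of `ℝ × ℝ`.
It slides the points of each square `‖z‖ = r` along that square, around its corners. -/
noncomputable def shear (t : ℝ) (z : ℝ × ℝ) : ℝ × ℝ :=
  (‖z‖ / ‖(z.1 + t * z.2, z.2)‖) • (z.1 + t * z.2, z.2)

lemma shear_aux_ne {t : ℝ} {z : ℝ × ℝ} (hz : z ≠ 0) : (z.1 + t * z.2, z.2) ≠ 0 := by
  intro h
  apply hz
  simp only [Prod.ext_iff, Prod.fst_zero, Prod.snd_zero] at h ⊢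
  obtain ⟨h1, h2⟩ := h
  simpa [h2] using h1

lemma norm_shear (t : ℝ) (z : ℝ × ℝ) : ‖shear t z‖ = ‖z‖ := by
  by_cases hz : z = 0
  · simp [shear, hz]
  have := norm_ne_zero_iff.2 (shear_aux_ne (t := t) hz)
  rw [shear, norm_smul, Real.norm_eq_abs, abs_of_nonneg (by positivity)]
  field_simp

lemma shear_neg_shear (t : ℝ) (z : ℝ × ℝ) : shear (-t) (shear t z) = z := by
  by_cases hz : z = 0
  · simp [shear, hz]
  have h1 := norm_ne_zero_iff.2 (shear_aux_ne (t := t) hz)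
  have h2 := norm_ne_zero_iff.2 hz
  have h3 : ((shear t z).1 + -t * (shear t z).2, (shear t z).2)
      = (‖z‖ / ‖(z.1 + t * z.2, z.2)‖) • z := by
    simp only [shear, Prod.smul_fst, Prod.smul_snd, smul_eq_mul]
    ext <;> simp
    ring
  rw [shear, norm_shear, h3, norm_smul, Real.norm_eq_abs, abs_of_nonneg (by positivity), smul_smul]
  convert one_smul ℝ z
  field_simp

lemma continuous_shear (t : ℝ) : Continuous (shear t) := by
  rw [continuous_iff_continuousAt]
  intro z
  by_cases hz : z = 0
  · subst hz
    have : shear t 0 = 0 := by simp [shear]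
    rw [ContinuousAt, this, tendsto_zero_iff_norm_tendsto_zero]
    simp only [norm_shear]
    simpa using (continuous_norm (E := ℝ × ℝ)).tendsto 0
  · have h : ContinuousAt (fun z : ℝ × ℝ => (z.1 + t * z.2, z.2)) z := by fun_prop
    exact (continuous_norm.continuousAt.div h.norm
      (norm_ne_zero_iff.2 (shear_aux_ne (t := t) hz))).smul h

lemma norm_shear_sub_le (t : ℝ) (z : ℝ × ℝ) : ‖shear t z - z‖ ≤ 2 * |t| * ‖z‖ := by
  by_cases hz : z = 0
  · simp [shear, hz]
  set w : ℝ × ℝ := (z.1 + t * z.2, z.2) with hw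
  have h1 : ‖w‖ ≠ 0 := norm_ne_zero_iff.2 (shear_aux_ne (t := t) hz)
  have h2 : ‖w - z‖ ≤ |t| * ‖z‖ := by
    have : w - z = (t * z.2, 0) := by ext <;> simp [hw]
    rw [this, Prod.norm_def]
    simp only [norm_mul, Real.norm_eq_abs, norm_zero]
    refine max_le ?_ (by positivity)
    gcongr
    exact norm_snd_le z
  have h3 : ‖shear t z - w‖ ≤ ‖w - z‖ := by
    have : shear t z - w = (‖z‖ / ‖w‖ - 1) • w := by rw [sub_smul, one_smul]; rfl
    rw [this, norm_smul, Real.norm_eq_abs]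
    calc |‖z‖ / ‖w‖ - 1| * ‖w‖ = |(‖z‖ / ‖w‖ - 1) * ‖w‖| := by rw [abs_mul, abs_norm]
      _ = |‖z‖ - ‖w‖| := by congr 1; field_simp
      _ ≤ ‖z - w‖ := abs_norm_sub_norm_le _ _
      _ = ‖w - z‖ := norm_sub_rev _ _
  calc ‖shear t z - z‖ ≤ ‖shear t z - w‖ + ‖w - z‖ := norm_sub_le_norm_sub_add_norm_sub _ _ _
    _ ≤ 2 * |t| * ‖z‖ := by linarith

/-- A point `(±1, b)` of a vertical side of the square, close enough to the upper corner, is moved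
off that side. -/
lemma abs_shear_corner_lt {s t b : ℝ} (hs : |s| = 1) (ht0 : 0 ≤ t) (ht1 : t ≤ 1) (hb0 : 0 < b)
    (hb1 : b ≤ 1) (hb : 1 - t * b < b) : |(shear (-s * t) (s, b)).1| < 1 := by
  have hn : ‖((s, b) : ℝ × ℝ)‖ = 1 := by
    rw [Prod.norm_def]; simp [hs, abs_of_pos hb0, hb1]
  have htb : 0 ≤ 1 - t * b := by nlinarith
  have e : s + -s * t * b = s * (1 - t * b) := by ring
  have hn' : ‖((s + -s * t * b, b) : ℝ × ℝ)‖ = b := by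
    rw [Prod.norm_def, e]
    simp [hs, abs_of_pos hb0, abs_of_nonneg htb, hb.le]
  simp only [shear, hn, hn', Prod.smul_fst, smul_eq_mul]
  rw [e, abs_mul, abs_mul, hs, abs_of_nonneg htb, abs_of_pos (by positivity)]
  rw [one_div, one_mul, inv_mul_lt_iff₀ hb0]
  linarith

/-- The affine embedding of `[0,1]²` in `ℝ × ℝ` with image the unit ball of the sup norm. -/
noncomputable def toBall (z : I × I) : ℝ × ℝ := (2 * z.1 - 1, 2 * z.2 - 1)

/-- A left inverse of `toBall`. -/
noncomputable def ofBall (w : ℝ × ℝ) : I × I :=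
  (projIcc 0 1 zero_le_one ((w.1 + 1) / 2), projIcc 0 1 zero_le_one ((w.2 + 1) / 2))

lemma norm_toBall_le (z : I × I) : ‖toBall z‖ ≤ 1 := by
  rw [Prod.norm_def]
  refine max_le ?_ ?_ <;> rw [Real.norm_eq_abs, abs_le] <;> simp only [toBall] <;> constructor <;>
    linarith [z.1.2.1, z.1.2.2, z.2.2.1, z.2.2.2]

lemma ofBall_toBall (z : I × I) : ofBall (toBall z) = z := by
  simp [ofBall, toBall]

lemma mem_Icc_of_norm_le {w : ℝ × ℝ} (hw : ‖w‖ ≤ 1) :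
    (w.1 + 1) / 2 ∈ Icc (0 : ℝ) 1 ∧ (w.2 + 1) / 2 ∈ Icc (0 : ℝ) 1 := by
  have h1 := abs_le.1 ((norm_fst_le w).trans hw)
  have h2 := abs_le.1 ((norm_snd_le w).trans hw)
  refine ⟨⟨?_, ?_⟩, ⟨?_, ?_⟩⟩ <;> linarith [h1.1, h1.2, h2.1, h2.2]

lemma toBall_ofBall {w : ℝ × ℝ} (hw : ‖w‖ ≤ 1) : toBall (ofBall w) = w := by
  obtain ⟨h1, h2⟩ := mem_Icc_of_norm_le hw
  simp only [toBall, ofBall, projIcc_of_mem _ h1, projIcc_of_mem _ h2]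
  ext <;> simp <;> ring

lemma continuous_toBall : Continuous toBall := by unfold toBall; fun_prop

lemma continuous_ofBall : Continuous ofBall := by
  unfold ofBall
  exact (continuous_projIcc.comp (by fun_prop)).prodMk (continuous_projIcc.comp (by fun_prop))

/-- The homeomorphism of `[0,1]²` induced by `shear t`. -/
noncomputable def shearSquare (t : ℝ) : I × I ≃ₜ I × I where
  toFun z := ofBall (shear t (toBall z))
  invFun z := ofBall (shear (-t) (toBall z))
  left_inv z := by
    beta_reduce
    rw [toBall_ofBall (by rw [norm_shear]; exact norm_toBall_le z), shear_neg_shear, ofBall_toBall]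
  right_inv z := by
    beta_reduce
    rw [toBall_ofBall (by rw [norm_shear]; exact norm_toBall_le z)]
    have := shear_neg_shear (-t) (toBall z)
    rw [neg_neg] at this
    rw [this, ofBall_toBall]
  continuous_toFun := continuous_ofBall.comp ((continuous_shear t).comp continuous_toBall)
  continuous_invFun := continuous_ofBall.comp ((continuous_shear (-t)).comp continuous_toBall)

lemma shearSquare_fst (t : ℝ) (z : I × I) :
    ((shearSquare t z).1 : ℝ) = ((shear t (toBall z)).1 + 1) / 2 := by
  have h := mem_Icc_of_norm_le (w := shear t (toBall z))
    (by rw [norm_shear]; exact norm_toBall_le z)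
  change ((ofBall (shear t (toBall z))).1 : ℝ) = _
  simp only [ofBall, projIcc_of_mem _ h.1]

lemma abs_shearSquare_sub_le (t : ℝ) (z : I × I) :
    |((shearSquare t z).1 : ℝ) - z.1| ≤ |t| := by
  have h1 := (norm_fst_le _).trans (norm_shear_sub_le t (toBall z))
  have h2 : |(shear t (toBall z)).1 - (2 * z.1 - 1)| ≤ 2 * |t| := by
    refine h1.trans ?_
    have := mul_le_mul_of_nonneg_left (norm_toBall_le z) (abs_nonneg t)
    linarith
  rw [shearSquare_fst, show ((shear t (toBall z)).1 + 1) / 2 - (z.1 : ℝ)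
    = ((shear t (toBall z)).1 - (2 * z.1 - 1)) / 2 by ring, abs_div, abs_two]
  linarith

/-- `powI` as a homeomorphism of `[0,1]`. -/
noncomputable def powHomeo (c : ℝ) : I ≃ₜ I where
  toFun x := powI x c
  invFun x := powI x (-c)
  left_inv x := powI_powI_neg x c
  right_inv x := powI_neg_powI x c
  continuous_toFun := continuous_id.powI continuous_const
  continuous_invFun := continuous_id.powI continuous_const

/-- Homeomorphisms of `[0,1]` move any point arbitrarily close to `1`; at the endpoint `0` this
takes the reflection. -/
lemma exists_homeo_gt (x : I) {η : ℝ} (hη : η < 1) : ∃ P : I ≃ₜ I, η < (P x : ℝ) := by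
  rcases x.2.1.eq_or_lt with h0 | h0
  · refine ⟨unitInterval.symmHomeomorph, ?_⟩
    have : x = 0 := Subtype.ext h0.symm
    simp [this, hη]
  rcases x.2.2.eq_or_lt with h1 | h1
  · exact ⟨Homeomorph.refl _, by simpa [h1] using hη⟩
  obtain ⟨y, hy1, hy2⟩ := exists_between (max_lt hη zero_lt_one)
  have hy0 : 0 < y := (le_max_right _ _).trans_lt hy1
  refine ⟨powHomeo (logLog ⟨y, hy0.le, hy2.le⟩ - logLog x), ?_⟩
  change η < (powI x _ : ℝ)
  rw [powI_logLog_sub h0 h1 hy0 hy2]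
  exact (le_max_left _ _).trans_lt hy1

/-- Every point of the square can be pushed off the two vertical sides by a homeomorphism that
moves first coordinates by at most `ε`: an unrestricted homeomorphism of the second coordinate
brings the point close to a corner, and a small shear slides it around that corner. -/
lemma exists_push (x : I × I) {ε : ℝ} (hε : 0 < ε) :
    ∃ F : I × I ≃ₜ I × I, (∀ z, |((F z).1 : ℝ) - z.1| ≤ ε) ∧
      0 < ((F x).1 : ℝ) ∧ ((F x).1 : ℝ) < 1 := by
  by_cases hx : 0 < (x.1 : ℝ) ∧ (x.1 : ℝ) < 1
  · exact ⟨Homeomorph.refl _, fun z => by simpa using hε.le, hx⟩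
  have hs : |2 * (x.1 : ℝ) - 1| = 1 := by
    rcases x.1.2.1.eq_or_lt with h0 | h0
    · simp [← h0]
    · have : (x.1 : ℝ) = 1 := le_antisymm x.1.2.2 (not_lt.1 fun h => hx ⟨h0, h⟩)
      rw [this]; norm_num
  obtain ⟨s, hsdef⟩ : ∃ s, s = 2 * (x.1 : ℝ) - 1 := ⟨_, rfl⟩
  rw [← hsdef] at hs
  obtain ⟨t, ht0, ht⟩ := exists_between (lt_min hε zero_lt_one)
  have htε : t ≤ ε := (ht.le.trans (min_le_left _ _))
  have ht1 : t ≤ 1 := (ht.le.trans (min_le_right _ _))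
  have hη : (1 + 1 / (1 + t)) / 2 < 1 := by
    have : 1 / (1 + t) < 1 := by rw [div_lt_one] <;> linarith
    linarith
  obtain ⟨P, hP⟩ := exists_homeo_gt x.2 hη
  have hF : ∀ z, ((Homeomorph.refl I).prodCongr P).trans (shearSquare (-s * t)) z
      = shearSquare (-s * t) (z.1, P z.2) := fun _ => rfl
  refine ⟨((Homeomorph.refl I).prodCongr P).trans (shearSquare (-s * t)), fun z => ?_, ?_⟩
  · rw [hF]
    refine (abs_shearSquare_sub_le (-s * t) (z.1, P z.2)).trans ?_
    rw [abs_mul, abs_neg, hs, abs_of_pos ht0]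
    linarith
  · have hb : 1 / (1 + t) < 2 * (P x.2 : ℝ) - 1 := by linarith
    have hb0 : 0 < 2 * (P x.2 : ℝ) - 1 := lt_trans (by positivity) hb
    rw [div_lt_iff₀ (by linarith)] at hb
    have := abs_lt.1 (abs_shear_corner_lt hs ht0.le ht1 hb0 (by linarith [(P x.2).2.2])
      (by linarith))
    have e : toBall (x.1, P x.2) = (s, 2 * (P x.2 : ℝ) - 1) := by rw [hsdef, toBall]
    rw [hF, shearSquare_fst, e]
    constructor <;> linarith [this.1, this.2]

/-- Two points of the square with the same first coordinate in `(0,1)` can be given distinct first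
coordinates by a homeomorphism that moves first coordinates by at most `ε` and preserves second
coordinates. -/
lemma exists_separate {a b b' : I} (h0 : 0 < (a : ℝ)) (h1 : (a : ℝ) < 1) (hb : b ≠ b') {ε : ℝ}
    (hε : 0 < ε) : ∃ F : I × I ≃ₜ I × I, (∀ z, |((F z).1 : ℝ) - z.1| ≤ ε) ∧
      (∀ z, (F z).2 = z.2) ∧ (F (a, b)).1 ≠ (F (a, b')).1 := by
  have hl : 0 < Real.log (1 + ε) := Real.log_pos (by linarith)
  refine ⟨⟨⟨fun z => (powI z.1 (Real.log (1 + ε) * z.2), z.2),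
    fun z => (powI z.1 (-(Real.log (1 + ε) * z.2)), z.2), fun z => ?_, fun z => ?_⟩, ?_, ?_⟩,
    fun z => ?_, fun z => rfl, fun h => hb ?_⟩
  · simp [powI_powI_neg]
  · simp [powI_neg_powI]
  · exact (continuous_fst.powI (by fun_prop)).prodMk continuous_snd
  · exact (continuous_fst.powI (by fun_prop)).prodMk continuous_snd
  · refine (abs_powI_sub_le z.1 (mul_nonneg hl.le z.2.2.1)).trans ?_
    have : Real.exp (Real.log (1 + ε) * z.2) ≤ 1 + ε := by
      rw [← Real.exp_log (show 0 < 1 + ε by linarith)]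
      rw [Real.log_exp]
      exact Real.exp_le_exp.2 (mul_le_of_le_one_right hl.le z.2.2.2)
    linarith
  · have := powI_injective h0 h1 h
    exact Subtype.ext (mul_left_cancel₀ hl.ne' this)

/-! ### Moving a countable set into general position -/

/-- The homeomorphism of the Hilbert cube that acts as `F` on the coordinates `i` and `j`. -/
noncomputable def liftSquare (i j : ℕ) (hij : i ≠ j) (F : I × I ≃ₜ I × I) :
    HilbertCube ≃ₜ HilbertCube where
  toFun z k := if k = i then (F (z i, z j)).1 else if k = j then (F (z i, z j)).2 else z k
  invFun z k :=
    if k = i then (F.symm (z i, z j)).1 else if k = j then (F.symm (z i, z j)).2 else z k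
  left_inv z := by
    funext k
    by_cases hi : k = i
    · simp [hi, hij.symm]
    by_cases hj : k = j <;> simp [hi, hj, hij.symm]
  right_inv z := by
    funext k
    by_cases hi : k = i
    · simp [hi, hij.symm]
    by_cases hj : k = j <;> simp [hi, hj, hij.symm]
  continuous_toFun := by
    refine continuous_pi fun k => ?_
    split_ifs <;> fun_prop
  continuous_invFun := by
    refine continuous_pi fun k => ?_
    split_ifs <;> fun_prop

lemma liftSquare_apply (i j : ℕ) (hij : i ≠ j) (F : I × I ≃ₜ I × I) (z : HilbertCube) (k : ℕ) :
    liftSquare i j hij F z k =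
      if k = i then (F (z i, z j)).1 else if k = j then (F (z i, z j)).2 else z k := rfl

/-- The homeomorphism group of the Hilbert cube, as the closed set of pairs of mutually inverse
maps in `C(𝒰, 𝒰) × C(𝒰, 𝒰)`. -/
def inversePairs : Set (C(HilbertCube, HilbertCube) × C(HilbertCube, HilbertCube)) :=
  {p | p.1.comp p.2 = ContinuousMap.id _ ∧ p.2.comp p.1 = ContinuousMap.id _}

lemma isClosed_inversePairs : IsClosed inversePairs := by
  refine (isClosed_eq ?_ continuous_const).inter (isClosed_eq ?_ continuous_const)
  · exact continuous_fst.compCM continuous_snd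
  · exact continuous_snd.compCM continuous_fst

instance : BaireSpace inversePairs := by
  have : CompleteSpace inversePairs := isClosed_inversePairs.completeSpace_coe
  infer_instance

/-- The homeomorphism represented by a pair of mutually inverse maps. -/
def toHomeo (p : inversePairs) : HilbertCube ≃ₜ HilbertCube where
  toFun := p.1.1
  invFun := p.1.2
  left_inv z := DFunLike.congr_fun p.2.2 z
  right_inv z := DFunLike.congr_fun p.2.1 z
  continuous_toFun := p.1.1.continuous
  continuous_invFun := p.1.2.continuous

/-- Composition of a homeomorphism with an element of `inversePairs`. -/
def compPair (u : HilbertCube ≃ₜ HilbertCube) (p : inversePairs) : inversePairs :=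
  ⟨((u : C(HilbertCube, HilbertCube)).comp p.1.1,
    p.1.2.comp (u.symm : C(HilbertCube, HilbertCube))), by
      constructor
      · ext1 z
        have := DFunLike.congr_fun p.2.1 (u.symm z)
        simp only [ContinuousMap.comp_apply, ContinuousMap.id_apply] at this
        simp [this]
      · ext1 z
        have := DFunLike.congr_fun p.2.2 z
        simp only [ContinuousMap.comp_apply, ContinuousMap.id_apply] at this
        simp [this]⟩

/-- Uniform convergence to the identity may be checked on each coordinate; at stage `n` only the
first `n` coordinates need to be controlled. -/
lemma tendsto_id_of_coord {u : ℕ → C(HilbertCube, HilbertCube)}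
    (hu : ∀ n, ∀ k < n, ∀ z, |(u n z k : ℝ) - z k| ≤ 1 / ((n : ℝ) + 1)) :
    Tendsto u atTop (𝓝 (ContinuousMap.id _)) := by
  rw [ContinuousMap.tendsto_iff_tendstoUniformly, tendstoUniformly_iff_tendsto, Pi.uniformity,
    tendsto_iInf]
  intro k
  rw [tendsto_comap_iff]
  change Tendsto (fun q : ℕ × HilbertCube => (q.2 k, u q.1 q.2 k)) _ _
  rw [← tendstoUniformly_iff_tendsto (F := fun n z => u n z k) (f := fun z : HilbertCube => z k),
    Metric.tendstoUniformly_iff]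
  intro ε hε
  filter_upwards [eventually_gt_atTop k,
    (tendsto_one_div_add_atTop_nhds_zero_nat (𝕜 := ℝ)).eventually (gt_mem_nhds hε)] with n hn hnε z
  rw [dist_comm]
  exact (hu n k hn z).trans_lt hnε

/-- Composition with homeomorphisms of the cube close to the identity gives small perturbations of
an element of `inversePairs`. -/
lemma mem_closure_of_small {A : Set inversePairs} {p : inversePairs}
    (h : ∀ ε > 0, ∀ N : ℕ, ∃ u : HilbertCube ≃ₜ HilbertCube,
      (∀ k < N, ∀ z, |(u z k : ℝ) - z k| ≤ ε) ∧ compPair u p ∈ A) : p ∈ closure A := by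
  choose u hu hA using fun n : ℕ => h (1 / ((n : ℝ) + 1)) (by positivity) n
  refine mem_closure_of_tendsto (f := fun n => compPair (u n) p) (b := atTop) ?_
    (Eventually.of_forall hA)
  rw [tendsto_subtype_rng]
  have h1 : Tendsto (fun n => (u n : C(HilbertCube, HilbertCube))) atTop
      (𝓝 (ContinuousMap.id _)) := tendsto_id_of_coord hu
  have h2 : Tendsto (fun n => ((u n).symm : C(HilbertCube, HilbertCube))) atTop
      (𝓝 (ContinuousMap.id _)) := by
    refine tendsto_id_of_coord fun n k hk z => ?_
    have := hu n k hk ((u n).symm z)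
    rw [Homeomorph.apply_symm_apply, abs_sub_comm] at this
    exact this
  have h3 : Tendsto (fun n => (u n : C(HilbertCube, HilbertCube)).comp p.1.1) atTop
      (𝓝 p.1.1) := by
    simpa using h1.compCM (tendsto_const_nhds (x := p.1.1))
  have h4 : Tendsto (fun n => p.1.2.comp ((u n).symm : C(HilbertCube, HilbertCube))) atTop
      (𝓝 p.1.2) := by
    simpa using (tendsto_const_nhds (x := p.1.2)).compCM h2
  exact h3.prodMk_nhds h4

lemma continuous_eval_coord (x : HilbertCube) (i : ℕ) :
    Continuous fun p : inversePairs => (p.1.1 x i : I) := by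
  have : Continuous fun p : inversePairs => p.1.1 x :=
    (continuous_eval_const x).comp (continuous_fst.comp continuous_subtype_val)
  exact (continuous_apply i).comp this

lemma isOpen_interior_coord (x : HilbertCube) (i : ℕ) :
    IsOpen {p : inversePairs | 0 < (p.1.1 x i : ℝ) ∧ (p.1.1 x i : ℝ) < 1} := by
  have := continuous_subtype_val.comp (continuous_eval_coord x i)
  exact (isOpen_lt continuous_const this).inter (isOpen_lt this continuous_const)

/-- The coordinate `i` of the image of `x` is moved off `{0, 1}` with the help of a second
coordinate, so remote that changing it arbitrarily is a small change in the product topology. -/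
lemma dense_interior_coord (x : HilbertCube) (i : ℕ) :
    Dense {p : inversePairs | 0 < (p.1.1 x i : ℝ) ∧ (p.1.1 x i : ℝ) < 1} := by
  intro p
  refine mem_closure_of_small fun ε hε N => ?_
  obtain ⟨F, hF, hx⟩ := exists_push (p.1.1 x i, p.1.1 x (N + i + 1)) hε
  refine ⟨liftSquare i (N + i + 1) (by omega) F, fun k hk z => ?_, ?_⟩
  · rw [liftSquare_apply]
    split_ifs with h1 h2
    · subst h1; exact hF _
    · omega
    · simpa using hε.le
  · change 0 < (liftSquare i (N + i + 1) _ F (p.1.1 x) i : ℝ) ∧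
      (liftSquare i (N + i + 1) _ F (p.1.1 x) i : ℝ) < 1
    rw [liftSquare_apply, if_pos rfl]
    exact hx

lemma isOpen_separated (x y : HilbertCube) :
    IsOpen {p : inversePairs | p.1.1 x 0 ≠ p.1.1 y 0} :=
  isOpen_ne_fun (continuous_eval_coord x 0) (continuous_eval_coord y 0)

/-- Generically the image of `x` has first coordinate in `(0,1)`, and then another coordinate that
tells the images of `x` and `y` apart can be used to separate their first coordinates. -/
lemma dense_separated {x y : HilbertCube} (hxy : x ≠ y) :
    Dense {p : inversePairs | p.1.1 x 0 ≠ p.1.1 y 0} := by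
  refine dense_closure.1 ((dense_interior_coord x 0).mono fun p hp => ?_)
  by_cases h0 : p.1.1 x 0 = p.1.1 y 0
  swap
  · exact subset_closure h0
  obtain ⟨k, hk⟩ : ∃ k, p.1.1 x k ≠ p.1.1 y k := by
    by_contra! h
    exact hxy ((toHomeo p).injective (funext h))
  have hk0 : 0 ≠ k := by rintro rfl; exact hk h0
  refine mem_closure_of_small fun ε hε N => ?_
  obtain ⟨F, hF, hF2, hx⟩ := exists_separate hp.1 hp.2 hk hε
  refine ⟨liftSquare 0 k hk0 F, fun j hj z => ?_, ?_⟩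
  · rw [liftSquare_apply]
    split_ifs with h1 h2
    · subst h1; exact hF _
    · subst h2; simpa [hF2] using hε.le
    · simpa using hε.le
  · change liftSquare 0 k _ F (p.1.1 x) 0 ≠ liftSquare 0 k _ F (p.1.1 y) 0
    rw [liftSquare_apply, if_pos rfl, liftSquare_apply, if_pos rfl, ← h0]
    exact hx

/-- A generic homeomorphism of the Hilbert cube maps a given countable set into `(0,1)^ℕ`, and
gives its points distinct first coordinates. -/
lemma exists_generalPosition {D : Set HilbertCube} (hD : D.Countable) :
    ∃ u : HilbertCube ≃ₜ HilbertCube, (∀ x ∈ D, ∀ i, 0 < (u x i : ℝ) ∧ (u x i : ℝ) < 1) ∧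
      ∀ x ∈ D, ∀ y ∈ D, u x 0 = u y 0 → x = y := by
  have := hD.to_subtype
  have : Nonempty inversePairs := ⟨⟨(ContinuousMap.id _, ContinuousMap.id _), rfl, rfl⟩⟩
  have h1 : ∀ᶠ p : inversePairs in residual inversePairs, ∀ x : D, ∀ i : ℕ,
      0 < (p.1.1 x i : ℝ) ∧ (p.1.1 x i : ℝ) < 1 := by
    simp only [eventually_countable_forall]
    exact fun x i => residual_of_dense_open (isOpen_interior_coord _ _) (dense_interior_coord _ _)
  have h2 : ∀ᶠ p : inversePairs in residual inversePairs, ∀ x y : D, x ≠ y →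
      p.1.1 x 0 ≠ p.1.1 y 0 := by
    simp only [eventually_countable_forall]
    exact fun x y hxy => residual_of_dense_open (isOpen_separated _ _)
      (dense_separated fun h => hxy (Subtype.ext h))
  obtain ⟨p, hp1, hp2⟩ := (dense_of_mem_residual (h1.and h2)).nonempty
  refine ⟨toHomeo p, fun x hx => hp1 ⟨x, hx⟩, fun x hx y hy h => ?_⟩
  by_contra hne
  exact hp2 ⟨x, hx⟩ ⟨y, hy⟩ (fun h => hne (congrArg Subtype.val h)) h

/-! ### Extending order-preserving correspondences between dense sets -/

/-- A strictly order-preserving correspondence between dense subsets of `[0,1]` extends to a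
continuous bijection. -/
lemma exists_extension (R : Set (I × I)) (hR : ∀ p ∈ R, ∀ q ∈ R, p.1 < q.1 ↔ p.2 < q.2)
    (h1 : Dense (Prod.fst '' R)) (h2 : Dense (Prod.snd '' R)) :
    ∃ h : I → I, Continuous h ∧ Function.Bijective h ∧ ∀ p ∈ R, h p.1 = p.2 := by
  let h : I → I := fun x => sSup {b | ∃ q ∈ R, q.1 ≤ x ∧ q.2 = b}
  have hle : ∀ q ∈ R, ∀ x, q.1 ≤ x → q.2 ≤ h x := fun q hq x hx => le_sSup ⟨q, hq, hx, rfl⟩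
  have hge : ∀ q ∈ R, ∀ x, x ≤ q.1 → h x ≤ q.2 := fun q hq x hx => sSup_le <| by
    rintro _ ⟨r, hr, hrx, rfl⟩
    exact not_lt.1 fun hlt => not_lt.2 (hrx.trans hx) ((hR q hq r hr).2 hlt)
  have heq : ∀ q ∈ R, h q.1 = q.2 := fun q hq =>
    le_antisymm (hge q hq _ le_rfl) (hle q hq _ le_rfl)
  have hmono : StrictMono h := fun x y hxy => by
    obtain ⟨_, ⟨p, hp, rfl⟩, hxp, hpy⟩ := h1.exists_between hxy
    obtain ⟨_, ⟨q, hq, rfl⟩, hpq, hqy⟩ := h1.exists_between hpy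
    calc h x ≤ p.2 := hge p hp x hxp.le
      _ < q.2 := (hR p hp q hq).1 hpq
      _ ≤ h y := hle q hq y hqy.le
  have hdense : DenseRange h := h2.mono <| by
    rintro _ ⟨q, hq, rfl⟩
    exact ⟨q.1, heq q hq⟩
  have hcont : Continuous h := hmono.monotone.continuous_of_denseRange hdense
  refine ⟨h, hcont, ⟨hmono.injective, ?_⟩, heq⟩
  rw [← range_eq_univ, ← (isCompact_range hcont).isClosed.closure_eq, hdense.closure_range]

/-- The one-coordinate step of the back-and-forth: given finitely many pairs `(f q, g q)` in
matching order, a new point `x` on the `f` side has a partner `y` in `(0,1)` in the same relative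
position on the `g` side, and so do all points close to `y`. -/
lemma exists_gap {ι : Type*} (P : Finset ι) (f g : ι → I)
    (hg : ∀ q ∈ P, 0 < (g q : ℝ) ∧ (g q : ℝ) < 1)
    (hlt : ∀ q ∈ P, ∀ r ∈ P, f q < f r → g q < g r) (x : I) (hx : ∀ q ∈ P, f q ≠ x) :
    ∃ y : I, (0 < (y : ℝ) ∧ (y : ℝ) < 1) ∧
      ∀ᶠ y' in 𝓝 y, ∀ q ∈ P, (f q < x ∧ g q < y') ∨ (x < f q ∧ y' < g q) := by
  classical
  obtain ⟨y, hlo, hhi⟩ := Order.exists_between_finsets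
    (insert 0 ((P.filter fun q => f q < x).image fun q => (g q : ℝ)))
    (insert 1 ((P.filter fun q => x < f q).image fun q => (g q : ℝ))) (by
      simp only [Finset.mem_insert, Finset.mem_image, Finset.mem_filter]
      rintro _ (rfl | ⟨q, ⟨hq, hqx⟩, rfl⟩) _ (rfl | ⟨r, ⟨hr, hrx⟩, rfl⟩)
      · exact zero_lt_one
      · exact (hg r hr).1
      · exact (hg q hq).2
      · exact hlt q hq r hr (hqx.trans hrx))
  have hy0 : 0 < y := hlo 0 (Finset.mem_insert_self _ _)
  have hy1 : y < 1 := hhi 1 (Finset.mem_insert_self _ _)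
  refine ⟨⟨y, hy0.le, hy1.le⟩, ⟨hy0, hy1⟩, ?_⟩
  rw [Filter.eventually_all_finset]
  intro q hq
  rcases lt_or_gt_of_ne (hx q hq) with h | h
  · have : g q < ⟨y, hy0.le, hy1.le⟩ := hlo _ <| Finset.mem_insert_of_mem <|
      Finset.mem_image.2 ⟨q, Finset.mem_filter.2 ⟨hq, h⟩, rfl⟩
    filter_upwards [lt_mem_nhds this] with y' hy' using Or.inl ⟨h, hy'⟩
  · have : ⟨y, hy0.le, hy1.le⟩ < g q := hhi _ <| Finset.mem_insert_of_mem <|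
      Finset.mem_image.2 ⟨q, Finset.mem_filter.2 ⟨hq, h⟩, rfl⟩
    filter_upwards [gt_mem_nhds this] with y' hy' using Or.inr ⟨h, hy'⟩

/-! ### Back and forth between sets in general position -/

/-- A set of points of `(0,1)^ℕ` with pairwise distinct first coordinates. -/
structure GeneralPosition (S : Set HilbertCube) : Prop where
  interior : ∀ x ∈ S, ∀ i, 0 < (x i : ℝ) ∧ (x i : ℝ) < 1
  inj : ∀ x ∈ S, ∀ y ∈ S, x 0 = y 0 → x = y

/-- A finite approximation to the homeomorphism sought between `(𝒰, S)` and `(𝒰, T)`: finitely many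
pairs matching points of `S` with points of `T`, in the same order of first coordinates, and, for
each `i`, a continuous function `c i` of the first coordinate such that the power map with
parameter `c i` matches the coordinates `i + 1` of these pairs. The number `n` records that
further changes to `c i`, for `i < n`, are to be smaller than `(1/2)^n` in total. -/
structure Approx (S T : Set HilbertCube) where
  pairs : Finset (HilbertCube × HilbertCube)
  mem_left : ∀ p ∈ pairs, p.1 ∈ S
  mem_right : ∀ p ∈ pairs, p.2 ∈ T
  lt_iff : ∀ p ∈ pairs, ∀ q ∈ pairs, p.1 0 < q.1 0 ↔ p.2 0 < q.2 0
  c : ℕ → C(I, ℝ)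
  c_eq : ∀ p ∈ pairs, ∀ i, c i (p.1 0) = logLog (p.2 (i + 1)) - logLog (p.1 (i + 1))
  n : ℕ

namespace Approx

variable {S T : Set HilbertCube}

instance : Preorder (Approx S T) where
  le a b := a.pairs ⊆ b.pairs ∧ a.n ≤ b.n ∧
    ∀ i < a.n, dist (a.c i) (b.c i) ≤ (1 / 2) ^ a.n - (1 / 2) ^ b.n
  le_refl a := ⟨subset_rfl, le_rfl, fun i _ => by simp⟩
  le_trans a b d hab hbd := ⟨hab.1.trans hbd.1, hab.2.1.trans hbd.2.1, fun i hi => by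
    have h1 := hab.2.2 i hi
    have h2 := hbd.2.2 i (hi.trans_le hab.2.1)
    linarith [dist_triangle (a.c i) (b.c i) (d.c i)]⟩

lemma le_def {a b : Approx S T} : a ≤ b ↔ a.pairs ⊆ b.pairs ∧ a.n ≤ b.n ∧
    ∀ i < a.n, dist (a.c i) (b.c i) ≤ (1 / 2) ^ a.n - (1 / 2) ^ b.n := Iff.rfl

/-- A new pair `(s, t)` can be added when it respects the order of first coordinates and the value
prescribed for `c i` at `s 0` is, for `i < n`, close to the present one: `c i` is corrected by a
bump function supported away from the first coordinates already matched. -/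
lemma exists_insert (a : Approx S T) {s t : HilbertCube} (hs : s ∈ S) (ht : t ∈ T)
    (hord : ∀ q ∈ a.pairs, (q.1 0 < s 0 ∧ q.2 0 < t 0) ∨ (s 0 < q.1 0 ∧ t 0 < q.2 0))
    (hc : ∀ i < a.n,
      |logLog (t (i + 1)) - logLog (s (i + 1)) - a.c i (s 0)| < (1 / 2) ^ (a.n + 1)) :
    ∃ b, a ≤ b ∧ (s, t) ∈ b.pairs := by
  classical
  obtain ⟨φ, hφ0, hφ1, hφ⟩ := exists_continuous_zero_one_of_isClosed
    (s := ((a.pairs.image fun q => q.1 0 : Finset I) : Set I)) (t := {s 0})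
    (Finset.finite_toSet _).isClosed isClosed_singleton (by
      rw [Set.disjoint_singleton_right, Finset.mem_coe, Finset.mem_image]
      rintro ⟨q, hq, hqs⟩
      rcases hord q hq with h | h
      · exact h.1.ne hqs
      · exact h.1.ne' hqs)
  have hφs : φ (s 0) = 1 := hφ1 rfl
  have hφq : ∀ q ∈ a.pairs, φ (q.1 0) = 0 := fun q hq =>
    hφ0 (Finset.mem_coe.2 (Finset.mem_image_of_mem _ hq))
  let δ : ℕ → ℝ := fun i => logLog (t (i + 1)) - logLog (s (i + 1)) - a.c i (s 0)
  refine ⟨⟨insert (s, t) a.pairs, ?_, ?_, ?_, fun i => a.c i + δ i • φ, ?_, a.n + 1⟩, ?_,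
    Finset.mem_insert_self _ _⟩
  · simp only [Finset.forall_mem_insert]
    exact ⟨hs, a.mem_left⟩
  · simp only [Finset.forall_mem_insert]
    exact ⟨ht, a.mem_right⟩
  · simp only [Finset.forall_mem_insert]
    refine ⟨⟨by simp, fun q hq => ?_⟩, fun q hq => ⟨?_, a.lt_iff q hq⟩⟩
    · rcases hord q hq with h | h
      · simp [h.1.not_gt, h.2.not_gt]
      · simp [h.1, h.2]
    · rcases hord q hq with h | h
      · simp [h.1, h.2]
      · simp [h.1.not_gt, h.2.not_gt]
  · simp only [Finset.forall_mem_insert]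
    refine ⟨fun i => ?_, fun q hq i => ?_⟩
    · simp [hφs, δ]
    · simp [hφq q hq, a.c_eq q hq]
  · refine le_def.2 ⟨Finset.subset_insert _ _, Nat.le_succ _, fun i hi => ?_⟩
    have e : (1 / 2 : ℝ) ^ a.n - (1 / 2) ^ (a.n + 1) = (1 / 2) ^ (a.n + 1) := by ring
    change dist (a.c i) (a.c i + δ i • φ) ≤ (1 / 2) ^ a.n - (1 / 2) ^ (a.n + 1)
    rw [e, ContinuousMap.dist_le (by positivity)]
    intro x
    have h1 : |φ x| ≤ 1 := abs_le.2 ⟨by linarith [(hφ x).1], (hφ x).2⟩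
    simp only [ContinuousMap.add_apply, ContinuousMap.smul_apply, smul_eq_mul, dist_self_add_right,
      Real.norm_eq_abs, abs_mul]
    exact (mul_le_of_le_one_right (abs_nonneg _) h1).trans (hc i hi).le

/-- Every point of `S` can be matched: being in the gap prescribed by the order and having the
first `n` further coordinates almost right is an open condition, so `T` contains such a partner. -/
lemma exists_forth (a : Approx S T) (hS : GeneralPosition S) (hT : GeneralPosition T)
    (hTd : Dense T) {s : HilbertCube} (hs : s ∈ S) : ∃ b, a ≤ b ∧ ∃ t, (s, t) ∈ b.pairs := by
  by_cases hmem : ∃ t, (s, t) ∈ a.pairs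
  · exact ⟨a, le_rfl, hmem⟩
  obtain ⟨y, hy, hgap⟩ := exists_gap a.pairs (fun q => q.1 0) (fun q => q.2 0)
    (fun q hq => hT.interior _ (a.mem_right q hq) 0)
    (fun q hq r hr => (a.lt_iff q hq r hr).1) (s 0)
    (fun q hq h => hmem ⟨q.2, by rwa [← hS.inj _ (a.mem_left q hq) _ hs h]⟩)
  -- The ideal partner of `s`, for which no `c i` would change; a point of `T` near it is used.
  let w : ℕ → I := fun i => powI (s (i + 1)) (a.c i (s 0))
  let z : HilbertCube := fun k => Nat.casesOn k y w
  have h0 : ∀ᶠ t in 𝓝 z, ∀ q ∈ a.pairs,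
      (q.1 0 < s 0 ∧ q.2 0 < t 0) ∨ (s 0 < q.1 0 ∧ t 0 < q.2 0) :=
    (show Tendsto (fun t : HilbertCube => t 0) (𝓝 z) (𝓝 y) from
      (continuous_apply 0).tendsto z).eventually hgap
  have h1 : ∀ᶠ t in 𝓝 z, ∀ i ∈ Finset.range a.n,
      |logLog (t (i + 1)) - logLog (s (i + 1)) - a.c i (s 0)| < (1 / 2) ^ (a.n + 1) := by
    rw [Filter.eventually_all_finset]
    intro i _
    obtain ⟨hs0, hs1⟩ := hS.interior s hs (i + 1)
    have hc : ContinuousAt (fun t : HilbertCube => logLog (t (i + 1))) z :=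
      ContinuousAt.comp (g := logLog) (x := z) (f := fun t : HilbertCube => t (i + 1))
        (continuousAt_logLog (x := w i) (powI_pos hs0 _) (powI_lt_one hs1 _))
        (continuous_apply _).continuousAt
    refine (((hc.sub_const _).sub_const _).abs).eventually_lt_const ?_
    change |logLog (powI (s (i + 1)) (a.c i (s 0))) - _ - _| < _
    rw [logLog_powI hs0 hs1]
    simp
  obtain ⟨t, ht, h0, h1⟩ := ((mem_closure_iff_frequently.1 (hTd z)).and_eventually
    (h0.and h1)).exists
  obtain ⟨b, hab, hb⟩ := a.exists_insert hs ht h0 fun i hi => h1 i (Finset.mem_range.2 hi)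
  exact ⟨b, hab, t, hb⟩

/-- Every point of `T` can be matched, since the conditions on its partner are again open. -/
lemma exists_back (a : Approx S T) (hS : GeneralPosition S) (hT : GeneralPosition T)
    (hSd : Dense S) {t : HilbertCube} (ht : t ∈ T) : ∃ b, a ≤ b ∧ ∃ s, (s, t) ∈ b.pairs := by
  by_cases hmem : ∃ s, (s, t) ∈ a.pairs
  · exact ⟨a, le_rfl, hmem⟩
  obtain ⟨y, hy, hgap⟩ := exists_gap a.pairs (fun q => q.2 0) (fun q => q.1 0)
    (fun q hq => hS.interior _ (a.mem_left q hq) 0)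
    (fun q hq r hr => (a.lt_iff q hq r hr).2) (t 0)
    (fun q hq h => hmem ⟨q.1, by rwa [← hT.inj _ (a.mem_right q hq) _ ht h]⟩)
  -- The point with first coordinate `y` that the present power maps send to the coordinates of `t`.
  let w : ℕ → I := fun i => powI (t (i + 1)) (-a.c i y)
  let z : HilbertCube := fun k => Nat.casesOn k y w
  have h0 : ∀ᶠ s in 𝓝 z, ∀ q ∈ a.pairs,
      (q.2 0 < t 0 ∧ q.1 0 < s 0) ∨ (t 0 < q.2 0 ∧ s 0 < q.1 0) :=
    (show Tendsto (fun s : HilbertCube => s 0) (𝓝 z) (𝓝 y) from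
      (continuous_apply 0).tendsto z).eventually hgap
  have h1 : ∀ᶠ s in 𝓝 z, ∀ i ∈ Finset.range a.n,
      |logLog (t (i + 1)) - logLog (s (i + 1)) - a.c i (s 0)| < (1 / 2) ^ (a.n + 1) := by
    rw [Filter.eventually_all_finset]
    intro i _
    obtain ⟨ht0, ht1⟩ := hT.interior t ht (i + 1)
    have hc : ContinuousAt (fun s : HilbertCube => logLog (s (i + 1))) z :=
      ContinuousAt.comp (g := logLog) (x := z) (f := fun s : HilbertCube => s (i + 1))
        (continuousAt_logLog (x := w i) (powI_pos ht0 _) (powI_lt_one ht1 _))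
        (continuous_apply _).continuousAt
    have hc' : ContinuousAt (fun s : HilbertCube => a.c i (s 0)) z :=
      ((a.c i).continuous.comp (continuous_apply 0)).continuousAt
    refine (((continuousAt_const.sub hc).sub hc').abs).eventually_lt_const ?_
    change |_ - logLog (powI (t (i + 1)) (-a.c i y)) - a.c i y| < _
    rw [logLog_powI ht0 ht1]
    simp
  obtain ⟨s, hs, h0, h1⟩ := ((mem_closure_iff_frequently.1 (hSd z)).and_eventually
    (h0.and h1)).exists
  obtain ⟨b, hab, hb⟩ := a.exists_insert hs ht
    (fun q hq => (h0 q hq).imp And.symm And.symm) fun i hi => h1 i (Finset.mem_range.2 hi)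
  exact ⟨b, hab, s, hb⟩

lemma exists_le_n (a : Approx S T) (m : ℕ) : ∃ b, a ≤ b ∧ m ≤ b.n := by
  refine ⟨{ a with n := max a.n m }, le_def.2 ⟨subset_rfl, le_max_left _ _, fun i _ => ?_⟩,
    le_max_right _ _⟩
  have : (1 / 2 : ℝ) ^ max a.n m ≤ (1 / 2) ^ a.n :=
    pow_le_pow_of_le_one (by norm_num) (by norm_num) (le_max_left _ _)
  simpa using this

end Approx

/-- The outcome of the back-and-forth construction: a correspondence between the whole of `S` and
the whole of `T`, and the limits of the functions `c i`. -/
lemma exists_matching {S T : Set HilbertCube} (hS : GeneralPosition S) (hT : GeneralPosition T)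
    (hSc : S.Countable) (hTc : T.Countable) (hSd : Dense S) (hTd : Dense T) :
    ∃ (R : Set (HilbertCube × HilbertCube)) (c : ℕ → C(I, ℝ)),
      (∀ p ∈ R, p.1 ∈ S ∧ p.2 ∈ T) ∧ (∀ s ∈ S, ∃ t, (s, t) ∈ R) ∧ (∀ t ∈ T, ∃ s, (s, t) ∈ R) ∧
      (∀ p ∈ R, ∀ q ∈ R, p.1 0 < q.1 0 ↔ p.2 0 < q.2 0) ∧
      ∀ p ∈ R, ∀ i, c i (p.1 0) = logLog (p.2 (i + 1)) - logLog (p.1 (i + 1)) := by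
  have := hSc.to_subtype
  have := hTc.to_subtype
  let _ : Encodable (S ⊕ T ⊕ ℕ) := Encodable.ofCountable _
  let D : S ⊕ T ⊕ ℕ → Order.Cofinal (Approx S T)
    | .inl s => ⟨{b | ∃ t, (s.1, t) ∈ b.pairs}, fun a =>
        let ⟨b, hab, hb⟩ := a.exists_forth hS hT hTd s.2; ⟨b, hb, hab⟩⟩
    | .inr (.inl t) => ⟨{b | ∃ s, (s, t.1) ∈ b.pairs}, fun a =>
        let ⟨b, hab, hb⟩ := a.exists_back hS hT hSd t.2; ⟨b, hb, hab⟩⟩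
    | .inr (.inr m) => ⟨{b | m ≤ b.n}, fun a =>
        let ⟨b, hab, hb⟩ := a.exists_le_n m; ⟨b, hb, hab⟩⟩
  let a₀ : Approx S T := ⟨∅, by simp, by simp, by simp, 0, by simp, 0⟩
  let a : ℕ → Approx S T := Order.sequenceOfCofinals a₀ D
  have ha : Monotone a := Order.sequenceOfCofinals.monotone a₀ D
  have hD : ∀ x, ∃ k, a k ∈ D x := fun x => ⟨_, Order.sequenceOfCofinals.encode_mem a₀ D x⟩
  have hcauchy : ∀ i, CauchySeq fun k => (a k).c i := fun i => by
    rw [Metric.cauchySeq_iff']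
    intro ε hε
    obtain ⟨m, hm⟩ := exists_pow_lt_of_lt_one hε (show (1 / 2 : ℝ) < 1 by norm_num)
    obtain ⟨k, hk : max m (i + 1) ≤ (a k).n⟩ := hD (.inr (.inr (max m (i + 1))))
    refine ⟨k, fun l hl => ?_⟩
    have h1 := (Approx.le_def.1 (ha hl)).2.2 i (by omega)
    have h2 : (1 / 2 : ℝ) ^ (a k).n ≤ (1 / 2) ^ m :=
      pow_le_pow_of_le_one (by norm_num) (by norm_num) (by omega)
    have h3 : (0 : ℝ) < (1 / 2) ^ (a l).n := by positivity
    rw [dist_comm]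
    linarith
  choose c hc using fun i => cauchySeq_tendsto_of_complete (hcauchy i)
  refine ⟨{p | ∃ k, p ∈ (a k).pairs}, c, ?_, ?_, ?_, ?_, ?_⟩
  · rintro p ⟨k, hk⟩
    exact ⟨(a k).mem_left p hk, (a k).mem_right p hk⟩
  · intro s hs
    obtain ⟨k, t, ht⟩ := hD (.inl ⟨s, hs⟩)
    exact ⟨t, k, ht⟩
  · intro t ht
    obtain ⟨k, s, hs⟩ := hD (.inr (.inl ⟨t, ht⟩))
    exact ⟨s, k, hs⟩
  · rintro p ⟨k, hk⟩ q ⟨l, hl⟩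
    exact (a (max k l)).lt_iff p ((Approx.le_def.1 (ha (le_max_left k l))).1 hk) q
      ((Approx.le_def.1 (ha (le_max_right k l))).1 hl)
  · rintro p ⟨k, hk⟩ i
    have h1 : Tendsto (fun l => (a l).c i (p.1 0)) atTop (𝓝 (c i (p.1 0))) :=
      ((continuous_eval_const (p.1 0)).tendsto (c i)).comp (hc i)
    refine tendsto_nhds_unique h1 (tendsto_const_nhds.congr' ?_)
    filter_upwards [eventually_ge_atTop k] with l hl
    exact ((a l).c_eq p ((Approx.le_def.1 (ha hl)).1 hk) i).symm

/-- For sets in general position the homeomorphism is triangular: it acts on the first coordinate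
by an increasing bijection, and on each coordinate `i + 1` by a power map whose exponent depends
continuously on the first coordinate. -/
lemma exists_homeo_of_generalPosition {S T : Set HilbertCube} (hS : GeneralPosition S)
    (hT : GeneralPosition T) (hSc : S.Countable) (hTc : T.Countable) (hSd : Dense S)
    (hTd : Dense T) : ∃ h : HilbertCube ≃ₜ HilbertCube, h '' S = T := by
  obtain ⟨R, c, hR, hRS, hRT, hlt, hc⟩ := exists_matching hS hT hSc hTc hSd hTd
  have hdense : ∀ {A : Set HilbertCube}, Dense A → Dense ((fun z : HilbertCube => z 0) '' A) :=
    fun hA => (Function.surjective_eval 0).denseRange.dense_image (continuous_apply 0) hA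
  obtain ⟨f, hf, hfb, hfR⟩ := exists_extension ((fun p => (p.1 0, p.2 0)) '' R)
    (by
      rintro _ ⟨p, hp, rfl⟩ _ ⟨q, hq, rfl⟩
      exact hlt p hp q hq)
    ((hdense hSd).mono (by
      rintro _ ⟨s, hs, rfl⟩
      obtain ⟨t, ht⟩ := hRS s hs
      exact ⟨_, ⟨_, ht, rfl⟩, rfl⟩))
    ((hdense hTd).mono (by
      rintro _ ⟨t, ht, rfl⟩
      obtain ⟨s, hs⟩ := hRT t ht
      exact ⟨_, ⟨_, hs, rfl⟩, rfl⟩))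
  let H : HilbertCube → HilbertCube := fun z k =>
    Nat.casesOn k (f (z 0)) fun i => powI (z (i + 1)) (c i (z 0))
  have hH : Continuous H := by
    refine continuous_pi fun k => ?_
    cases k with
    | zero => exact hf.comp (continuous_apply 0)
    | succ i => exact (continuous_apply (i + 1)).powI (by fun_prop)
  have hinj : Function.Injective H := fun z w hzw => by
    have h0 : z 0 = w 0 := hfb.1 (congrFun hzw 0)
    funext k
    cases k with
    | zero => exact h0
    | succ i =>
      have h1 : powI (z (i + 1)) (c i (z 0)) = powI (w (i + 1)) (c i (w 0)) :=
        congrFun hzw (i + 1)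
      rw [← powI_powI_neg (z (i + 1)) (c i (z 0)), h1, h0, powI_powI_neg]
  have hsurj : Function.Surjective H := fun w => by
    obtain ⟨x, hx⟩ := hfb.2 (w 0)
    refine ⟨fun k => Nat.casesOn k x fun i => powI (w (i + 1)) (-c i x), ?_⟩
    funext k
    cases k with
    | zero => exact hx
    | succ i => exact powI_neg_powI _ _
  have hHR : ∀ p ∈ R, H p.1 = p.2 := fun p hp => by
    funext k
    cases k with
    | zero => exact hfR _ ⟨p, hp, rfl⟩
    | succ i =>
      change powI (p.1 (i + 1)) (c i (p.1 0)) = p.2 (i + 1)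
      obtain ⟨h1, h2⟩ := hR p hp
      rw [hc p hp i]
      exact powI_logLog_sub (hS.interior _ h1 _).1 (hS.interior _ h1 _).2
        (hT.interior _ h2 _).1 (hT.interior _ h2 _).2
  refine ⟨Continuous.homeoOfEquivCompactToT2 (f := Equiv.ofBijective H ⟨hinj, hsurj⟩) hH, ?_⟩
  change H '' S = T
  ext t
  constructor
  · rintro ⟨s, hs, rfl⟩
    obtain ⟨t, ht⟩ := hRS s hs
    rw [hHR _ ht]
    exact (hR _ ht).2
  · intro ht
    obtain ⟨s, hs⟩ := hRT t ht
    exact ⟨s, (hR _ hs).1, hHR _ hs⟩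

/-- **Fort's theorem.** The Hilbert cube is ω-homogeneous: for any two countable dense
subsets `S` and `T` of the Hilbert cube, there exists a self-homeomorphism `h` with
`h '' S = T`. -/
theorem hilbertCube_omega_homogeneous
    (S T : Set HilbertCube) (hScount : S.Countable) (hSdense : Dense S)
    (hTcount : T.Countable) (hTdense : Dense T) :
    ∃ h : HilbertCube ≃ₜ HilbertCube, h '' S = T := by
  have key : ∀ {A : Set HilbertCube}, A.Countable → Dense A →
      ∃ u : HilbertCube ≃ₜ HilbertCube, GeneralPosition (u '' A) ∧ (u '' A).Countable ∧
        Dense (u '' A) := fun {A} hA hAd => by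
    obtain ⟨u, h1, h2⟩ := exists_generalPosition hA
    refine ⟨u, ⟨?_, ?_⟩, hA.image _, u.surjective.denseRange.dense_image u.continuous hAd⟩
    · rintro _ ⟨x, hx, rfl⟩
      exact h1 x hx
    · rintro _ ⟨x, hx, rfl⟩ _ ⟨y, hy, rfl⟩ h
      rw [h2 x hx y hy h]
  obtain ⟨u, hu, huc, hud⟩ := key hScount hSdense
  obtain ⟨v, hv, hvc, hvd⟩ := key hTcount hTdense
  obtain ⟨g, hg⟩ := exists_homeo_of_generalPosition hu hv huc hvc hud hvd
  refine ⟨(u.trans g).trans v.symm, ?_⟩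
  have e : ⇑((u.trans g).trans v.symm) = v.symm ∘ g ∘ u := rfl
  rw [e, image_comp, image_comp, hg, ← image_comp, v.symm_comp_self, image_id]
end

section
/- (Bennett's theorem, part of Theorem 2.5.) Every nonempty connected topological n-manifold with a countable base is ω-homogeneous: if X is a nonempty, connected, Hausdorff, second-countable topological space that is locally homeomorphic to Euclidean space ℝⁿ (i.e., a charted space over ℝⁿ), then for any two countable dense subsets S and T of X there exists a homeomorphism h : X → X with h(S) = T. -/
/-!
The argument is a back-and-forth construction.

A manifold is *strongly locally homogeneous*: any point `y` can be moved to any sufficiently close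
point by a self-homeomorphism which is the identity outside a prescribed neighbourhood of `y`
(`exists_push_of_chartedSpace`). In `ℝⁿ` such a homeomorphism is
`x ↦ x + max 0 (1 - dist x c / r) • (z - c)`, a perturbation of the identity by a map with Lipschitz
constant `‖z - c‖ / r < 1` (`exists_push_euclidean`); it is carried to the manifold by a chart.

A manifold is also Polish, being locally compact, Hausdorff and second countable
(`polishSpace_of_locallyCompact`). Fix a complete metric and enumerate `S` and `T`. One builds
homeomorphisms `h₀ = id, h₁, h₂, …` together with increasing finite sets of pairs `(a, b) ∈ S × T`
such that `hₖ a = b`. To include a new point `a ∈ S`, compose `hₖ` with a homeomorphism pushing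
`hₖ a` to a point of `T`, supported in so small a neighbourhood `N` of `hₖ a` that no matched point
lies in `N` and both `N` and `hₖ⁻¹(N)` have small diameter (`FiniteMatching.exists_forth`). A new
point of `T` is included by applying the same step to the inverse. As both `hₖ` and `hₖ⁻¹` then
converge uniformly, the limit is a homeomorphism (`exists_limit_homeomorph`), and it extends all
the finite matchings, hence maps `S` onto `T`. Connectedness plays no role, since the points are
only moved locally.
-/

open Topology Filter Set

/-! ### Local pushing homeomorphisms -/

/-- The map `x ↦ x + max 0 (1 - dist x c / r) • (z - c)` is a homeomorphism because it differs from
the identity by a contraction. -/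
theorem exists_push_euclidean {E : Type*} [NormedAddCommGroup E] [NormedSpace ℝ E]
    [CompleteSpace E] (c z : E) (r : ℝ) (hr : 0 < r) (hz : dist z c < r) :
    ∃ g : E ≃ₜ E, g c = z ∧ ∀ x ∉ Metric.closedBall c r, g x = x := by
  set φ : E → ℝ := fun x => max 0 (1 - dist x c / r) with hφ
  have hφL : ∀ x y, |φ x - φ y| ≤ dist x y / r := by
    intro x y
    have h1 := abs_max_sub_max_le_abs (1 - dist x c / r) (1 - dist y c / r) 0
    rw [max_comm _ (0 : ℝ), max_comm _ (0 : ℝ)] at h1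
    refine h1.trans ?_
    have h2 : (1 - dist x c / r) - (1 - dist y c / r) = (dist y c - dist x c) / r := by ring
    rw [h2, abs_div, abs_of_pos hr, dist_comm x y]
    gcongr
    exact abs_dist_sub_le y x c
  let C : NNReal := ⟨dist z c / r, by positivity⟩
  have hA : ApproximatesLinearOn (fun x => x + φ x • (z - c))
      ((ContinuousLinearEquiv.refl ℝ E : E ≃L[ℝ] E) : E →L[ℝ] E) univ C := by
    intro x _ y _
    have h1 : x + φ x • (z - c) - (y + φ y • (z - c)) -
        ((ContinuousLinearEquiv.refl ℝ E : E ≃L[ℝ] E) : E →L[ℝ] E) (x - y)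
        = (φ x - φ y) • (z - c) := by
      simp [sub_smul]; abel
    rw [h1, norm_smul, Real.norm_eq_abs, ← dist_eq_norm z c, ← dist_eq_norm x y]
    calc |φ x - φ y| * dist z c ≤ dist x y / r * dist z c := by gcongr; exact hφL x y
      _ = (dist z c / r) * dist x y := by ring
  have hC : Subsingleton E ∨
      C < ‖((ContinuousLinearEquiv.refl ℝ E : E ≃L[ℝ] E).symm : E →L[ℝ] E)‖₊⁻¹ := by
    rcases subsingleton_or_nontrivial E with h | h
    · exact Or.inl h
    · right
      have h2 : ‖((ContinuousLinearEquiv.refl ℝ E : E ≃L[ℝ] E).symm : E →L[ℝ] E)‖₊ = 1 := by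
        have : ((ContinuousLinearEquiv.refl ℝ E : E ≃L[ℝ] E).symm : E →L[ℝ] E)
          = ContinuousLinearMap.id ℝ E := rfl
        rw [this]
        ext
        simp
      rw [h2, inv_one, ← NNReal.coe_lt_coe]
      exact (div_lt_one hr).2 hz
  refine ⟨hA.toHomeomorph _ hC, ?_, ?_⟩
  · change c + φ c • (z - c) = z
    simp [hφ]
  · intro x hx
    change x + φ x • (z - c) = x
    have h3 : φ x = 0 := by
      have : 1 ≤ dist x c / r := by
        rw [one_le_div hr]
        exact (not_le.1 hx).le
      simp only [hφ]
      exact max_eq_left (by linarith)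
    simp [h3]

/-- A homeomorphism fixing every point outside `K` preserves `K`. -/
theorem mapsTo_of_eq_self_off {E : Type*} [TopologicalSpace E] {K : Set E} (g : E ≃ₜ E)
    (hg : ∀ x ∉ K, g x = x) : MapsTo g K K := by
  intro x hx
  by_contra h
  exact h (by rwa [g.injective (hg _ h)])

theorem symm_eq_self_off {E : Type*} [TopologicalSpace E] {K : Set E} (g : E ≃ₜ E)
    (hg : ∀ x ∉ K, g x = x) : ∀ x ∉ K, g.symm x = x := by
  intro x hx
  rw [Homeomorph.symm_apply_eq, hg x hx]

open Classical in
/-- The self-map of `X` given by `g` in the chart `e`, and by the identity outside the chart. -/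
noncomputable def chartTransport {X E : Type*} [TopologicalSpace X] [TopologicalSpace E]
    (e : OpenPartialHomeomorph X E) (g : E → E) (x : X) : X :=
  if x ∈ e.source then e.symm (g (e x)) else x

/-- Continuity is checked on the open sets `e.source` and `(e.symm '' K)ᶜ`, which cover `X`; the
second is open because a compact set in a Hausdorff space is closed. -/
theorem continuous_chartTransport {X E : Type*} [TopologicalSpace X] [T2Space X]
    [TopologicalSpace E] (e : OpenPartialHomeomorph X E) {K : Set E} (hK : IsCompact K)
    (hKe : K ⊆ e.target) (g : E ≃ₜ E) (hg : ∀ x ∉ K, g x = x) :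
    Continuous (chartTransport e g) := by
  have hmaps : MapsTo g e.target e.target := by
    intro x hx
    by_cases hxK : x ∈ K
    · exact hKe (mapsTo_of_eq_self_off g hg hxK)
    · rwa [hg x hxK]
  have hclosed : IsClosed (e.symm '' K) :=
    (hK.image_of_continuousOn (e.continuousOn_symm.mono hKe)).isClosed
  rw [continuous_iff_continuousAt]
  intro x
  by_cases hx : x ∈ e.source
  · have h1 : ContinuousOn (fun x => e.symm (g (e x))) e.source :=
      e.continuousOn_symm.comp (g.continuous.comp_continuousOn e.continuousOn)
        (fun y hy => hmaps (e.map_source hy))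
    refine (h1.continuousAt (e.open_source.mem_nhds hx)).congr ?_
    filter_upwards [e.open_source.mem_nhds hx] with y hy
    simp [chartTransport, hy]
  · have hxK : x ∈ (e.symm '' K)ᶜ := by
      rintro ⟨k, hk, rfl⟩
      exact hx (e.map_target (hKe hk))
    refine continuousAt_id.congr ?_
    filter_upwards [hclosed.isOpen_compl.mem_nhds hxK] with y hy
    by_cases hys : y ∈ e.source
    · have : e y ∉ K := fun h => hy ⟨e y, h, e.left_inv hys⟩
      simp [chartTransport, hys, hg _ this]
    · simp [chartTransport, hys]

theorem chartTransport_leftInverse {X E : Type*} [TopologicalSpace X]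
    [TopologicalSpace E] (e : OpenPartialHomeomorph X E) {K : Set E}
    (hKe : K ⊆ e.target) (g : E ≃ₜ E) (hg : ∀ x ∉ K, g x = x) (x : X) :
    chartTransport e g.symm (chartTransport e g x) = x := by
  by_cases hx : x ∈ e.source
  · have h1 : g (e x) ∈ e.target := by
      by_cases hxK : e x ∈ K
      · exact hKe (mapsTo_of_eq_self_off g hg hxK)
      · rw [hg _ hxK]; exact e.map_source hx
    simp [chartTransport, hx, e.map_target h1, e.right_inv h1]
  · simp [chartTransport, hx]

/-- Strong local homogeneity of manifolds. -/
theorem exists_push_of_chartedSpace {E X : Type*} [NormedAddCommGroup E] [NormedSpace ℝ E]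
    [ProperSpace E] [TopologicalSpace X] [T2Space X] [ChartedSpace E X]
    (y : X) (N : Set X) (hN : N ∈ 𝓝 y) :
    ∃ V ∈ 𝓝 y, ∀ z ∈ V, ∃ g : X ≃ₜ X, g y = z ∧ ∀ x ∉ N, g x = x := by
  have : CompleteSpace E := inferInstance
  let e := chartAt E y
  have hy : y ∈ e.source := mem_chart_source E y
  have h1 : e.target ∩ e.symm ⁻¹' N ∈ 𝓝 (e y) := by
    refine inter_mem (e.open_target.mem_nhds (e.map_source hy)) ?_
    apply (e.continuousAt_symm (e.map_source hy)).preimage_mem_nhds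
    rwa [e.left_inv hy]
  obtain ⟨r, hr, hball⟩ := Metric.nhds_basis_closedBall.mem_iff.1 h1
  have hKe : Metric.closedBall (e y) r ⊆ e.target := fun x hx => (hball hx).1
  refine ⟨e.source ∩ e ⁻¹' Metric.ball (e y) r, inter_mem (e.open_source.mem_nhds hy)
    ((e.continuousAt hy).preimage_mem_nhds (Metric.ball_mem_nhds _ hr)), ?_⟩
  rintro z ⟨hz, hzr⟩
  obtain ⟨g, hgy, hg⟩ := exists_push_euclidean (e y) (e z) r hr hzr
  have hK : IsCompact (Metric.closedBall (e y) r) := isCompact_closedBall _ _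
  have hg' := symm_eq_self_off g hg
  refine ⟨⟨⟨chartTransport e g, chartTransport e g.symm, chartTransport_leftInverse e hKe g hg,
    fun x => ?_⟩, continuous_chartTransport e hK hKe g hg,
    continuous_chartTransport e hK hKe g.symm hg'⟩, ?_, ?_⟩
  · simpa using chartTransport_leftInverse e hKe g.symm hg' x
  · change chartTransport e g y = z
    simp [chartTransport, hy, hgy, e.left_inv hz]
  · intro x hx
    change chartTransport e g x = x
    by_cases hxs : x ∈ e.source
    · have : e x ∉ Metric.closedBall (e y) r := fun h => hx (by
        have := (hball h).2
        rwa [mem_preimage, e.left_inv hxs] at this)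
      simp [chartTransport, hxs, hg _ this]
    · simp [chartTransport, hxs]

/-! ### Complete metrizability -/

/-- A locally compact space is open in any metric completion. -/
theorem isOpen_range_coe_completion {X : Type*} [MetricSpace X] [LocallyCompactSpace X] :
    IsOpen (range ((↑) : X → UniformSpace.Completion X)) := by
  rw [isOpen_iff_mem_nhds]
  rintro _ ⟨x, rfl⟩
  obtain ⟨K, hK, hxK⟩ := exists_compact_mem_nhds x
  have hind : IsInducing ((↑) : X → UniformSpace.Completion X) :=
    (UniformSpace.Completion.isUniformInducing_coe X).isInducing
  rw [hind.nhds_eq_comap, mem_comap] at hxK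
  obtain ⟨O', hO', hOK⟩ := hxK
  obtain ⟨O, hOO', hO, hxO⟩ := mem_nhds_iff.1 hO'
  have hclosed : IsClosed (((↑) : X → UniformSpace.Completion X) '' K) :=
    (hK.image (UniformSpace.Completion.continuous_coe X)).isClosed
  refine mem_of_superset (hO.mem_nhds hxO) ?_
  have hsub : O ∩ range ((↑) : X → UniformSpace.Completion X) ⊆
      ((↑) : X → UniformSpace.Completion X) '' K := by
    rintro _ ⟨hz, w, rfl⟩
    exact ⟨w, hOK (hOO' hz), rfl⟩
  calc O ⊆ closure (O ∩ range ((↑) : X → UniformSpace.Completion X)) :=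
        UniformSpace.Completion.denseRange_coe.open_subset_closure_inter hO
    _ ⊆ ((↑) : X → UniformSpace.Completion X) '' K := closure_minimal hsub hclosed
    _ ⊆ _ := image_subset_range _ _

theorem polishSpace_of_locallyCompact (X : Type*) [TopologicalSpace X] [T2Space X]
    [SecondCountableTopology X] [LocallyCompactSpace X] : PolishSpace X := by
  let := TopologicalSpace.metrizableSpaceMetric X
  have hemb : IsEmbedding ((↑) : X → UniformSpace.Completion X) :=
    UniformSpace.Completion.isDenseEmbedding_coe.isEmbedding
  have hP : PolishSpace (range ((↑) : X → UniformSpace.Completion X)) :=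
    isOpen_range_coe_completion.polishSpace
  exact hemb.toHomeomorph.isClosedEmbedding.polishSpace

/-! ### Limits of homeomorphisms -/

theorem exists_uniform_limit {X : Type*} [MetricSpace X] [CompleteSpace X] (f : ℕ → X → X)
    (hf : ∀ k, Continuous (f k)) (hd : ∀ k x, dist (f k x) (f (k + 1) x) ≤ 1 * (1 / 2) ^ k) :
    ∃ F : X → X, Continuous F ∧ TendstoUniformly f F atTop := by
  have hlim : ∀ x, ∃ y, Tendsto (fun k => f k x) atTop (𝓝 y) := fun x =>
    cauchySeq_tendsto_of_complete
      (cauchySeq_of_le_geometric (1 / 2) 1 (by norm_num) (fun k => hd k x))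
  choose F hF using hlim
  have hu : TendstoUniformly f F atTop := by
    rw [Metric.tendstoUniformly_iff]
    intro ε hε
    have h0 : Tendsto (fun k : ℕ => (1 : ℝ) * (1 / 2) ^ k / (1 - 1 / 2)) atTop (𝓝 0) := by
      have := ((tendsto_pow_atTop_nhds_zero_of_lt_one (r := (1 / 2 : ℝ)) (by norm_num)
        (by norm_num)).const_mul 1).div_const (1 - 1 / 2)
      simpa using this
    filter_upwards [h0.eventually_lt_const hε] with k hk x
    rw [dist_comm]
    exact (dist_le_of_le_geometric_of_tendsto (1 / 2) 1 (by norm_num)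
      (fun k => hd k x) (hF x) k).trans_lt hk
  exact ⟨F, hu.continuous (Frequently.of_forall hf), hu⟩

/-- Uniform convergence lets one pass to the limit in `(h k).symm (h k x) = x` and in
`h k ((h k).symm x) = x`, so the limits of `h k` and `(h k).symm` are mutually inverse. -/
theorem exists_limit_homeomorph {X : Type*} [MetricSpace X] [CompleteSpace X] (h : ℕ → X ≃ₜ X)
    (hd : ∀ k x, dist (h k x) (h (k + 1) x) ≤ 1 * (1 / 2) ^ k)
    (hd' : ∀ k x, dist ((h k).symm x) ((h (k + 1)).symm x) ≤ 1 * (1 / 2) ^ k) :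
    ∃ H : X ≃ₜ X, ∀ x, Tendsto (fun k => h k x) atTop (𝓝 (H x)) := by
  obtain ⟨F, hFc, hF⟩ := exists_uniform_limit (fun k => h k) (fun k => (h k).continuous) hd
  obtain ⟨G, hGc, hG⟩ :=
    exists_uniform_limit (fun k => (h k).symm) (fun k => (h k).symm.continuous) hd'
  refine ⟨⟨⟨F, G, fun x => ?_, fun x => ?_⟩, hFc, hGc⟩, fun x => hF.tendsto_at x⟩
  · have h1 := hG.tendsto_comp hGc.continuousAt (hF.tendsto_at x)
    simp only [Homeomorph.symm_apply_apply] at h1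
    exact tendsto_nhds_unique h1 tendsto_const_nhds
  · have h1 := hF.tendsto_comp hFc.continuousAt (hG.tendsto_at x)
    simp only [Homeomorph.apply_symm_apply] at h1
    exact tendsto_nhds_unique h1 tendsto_const_nhds

/-! ### Back and forth -/

/-- A stage of the back-and-forth construction: a homeomorphism together with a finite part of its
graph contained in `S × T`, which all later stages retain. -/
structure FiniteMatching {X : Type*} [TopologicalSpace X] (S T : Set X) where
  /-- The current approximation to the homeomorphism sought. -/
  toHomeo : X ≃ₜ X
  /-- The pairs matched so far. -/
  pairs : Set (X × X)
  finite : pairs.Finite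
  mem : ∀ p ∈ pairs, p.1 ∈ S ∧ p.2 ∈ T
  map : ∀ p ∈ pairs, toHomeo p.1 = p.2

namespace FiniteMatching

/-- The inverse matching, which reduces the back step to the forth step. -/
def swap {X : Type*} [TopologicalSpace X] {S T : Set X} (P : FiniteMatching S T) :
    FiniteMatching T S where
  toHomeo := P.toHomeo.symm
  pairs := Prod.swap '' P.pairs
  finite := P.finite.image _
  mem := by
    rintro _ ⟨p, hp, rfl⟩
    exact (P.mem p hp).symm
  map := by
    rintro _ ⟨p, hp, rfl⟩
    simp [Homeomorph.symm_apply_eq, P.map p hp]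

/-- Any `a ∈ S` can be added to a matching while changing the homeomorphism and its inverse by at
most `ε`; `hX` is strong local homogeneity. -/
theorem exists_forth {X : Type*} [MetricSpace X]
    (hX : ∀ y : X, ∀ N ∈ 𝓝 y, ∃ V ∈ 𝓝 y, ∀ z ∈ V, ∃ g : X ≃ₜ X, g y = z ∧ ∀ x ∉ N, g x = x)
    {S T : Set X} (hT : Dense T) (P : FiniteMatching S T) {a : X} (ha : a ∈ S) {ε : ℝ}
    (hε : 0 < ε) :
    ∃ Q : FiniteMatching S T, P.pairs ⊆ Q.pairs ∧ (∃ b, (a, b) ∈ Q.pairs) ∧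
      (∀ x, dist (P.toHomeo x) (Q.toHomeo x) ≤ ε) ∧
      ∀ x, dist (P.toHomeo.symm x) (Q.toHomeo.symm x) ≤ ε := by
  by_cases hmem : ∃ b, (a, b) ∈ P.pairs
  · exact ⟨P, Subset.rfl, hmem, fun x => by simp [hε.le], fun x => by simp [hε.le]⟩
  set h := P.toHomeo with hh
  -- The support of the push: it avoids the matched points, and both it and its preimage under `h`
  -- have diameter at most `ε`.
  let N : Set X := (Metric.ball (h a) (ε / 2) ∩ h.symm ⁻¹' Metric.ball a (ε / 2)) ∩
    (Prod.snd '' P.pairs)ᶜ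
  have hN : N ∈ 𝓝 (h a) := by
    refine inter_mem (inter_mem (Metric.ball_mem_nhds _ (by positivity)) ?_) ?_
    · apply h.symm.continuous.continuousAt.preimage_mem_nhds
      rw [h.symm_apply_apply]
      exact Metric.ball_mem_nhds _ (by positivity)
    · refine (P.finite.image _).isClosed.isOpen_compl.mem_nhds ?_
      rintro ⟨p, hp, hpa⟩
      refine hmem ⟨p.2, ?_⟩
      have : p.1 = a := h.injective ((P.map p hp).trans hpa)
      rwa [← this]
  obtain ⟨V, hV, hpush⟩ := hX (h a) N hN
  obtain ⟨b, hbT, hbV⟩ := hT.inter_nhds_nonempty hV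
  obtain ⟨g, hgb, hg⟩ := hpush b hbV
  have hgN := mapsTo_of_eq_self_off g hg
  have hg' := symm_eq_self_off g hg
  have hgN' := mapsTo_of_eq_self_off g.symm hg'
  refine ⟨⟨h.trans g, insert (a, b) P.pairs, P.finite.insert _, ?_, ?_⟩, subset_insert _ _,
    ⟨b, mem_insert _ _⟩, ?_, ?_⟩
  · rintro p (rfl | hp)
    · exact ⟨ha, hbT⟩
    · exact P.mem p hp
  · rintro p (rfl | hp)
    · exact hgb
    · change g (h p.1) = p.2
      rw [P.map p hp]
      exact hg _ fun hpN => hpN.2 ⟨p, hp, rfl⟩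
  · intro x
    change dist (h x) (g (h x)) ≤ ε
    by_cases hx : h x ∈ N
    · have h1 : dist (h x) (h a) < ε / 2 := hx.1.1
      have h2 : dist (g (h x)) (h a) < ε / 2 := (hgN hx).1.1
      linarith [dist_triangle_right (h x) (g (h x)) (h a)]
    · rw [hg _ hx, dist_self]; exact hε.le
  · intro x
    change dist (h.symm x) (h.symm (g.symm x)) ≤ ε
    by_cases hx : x ∈ N
    · have h1 : dist (h.symm x) a < ε / 2 := hx.1.2
      have h2 : dist (h.symm (g.symm x)) a < ε / 2 := (hgN' hx).1.2
      linarith [dist_triangle_right (h.symm x) (h.symm (g.symm x)) a]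
    · rw [hg' _ hx, dist_self]; exact hε.le

theorem exists_forth_back {X : Type*} [MetricSpace X]
    (hX : ∀ y : X, ∀ N ∈ 𝓝 y, ∃ V ∈ 𝓝 y, ∀ z ∈ V, ∃ g : X ≃ₜ X, g y = z ∧ ∀ x ∉ N, g x = x)
    {S T : Set X} (hS : Dense S) (hT : Dense T) (P : FiniteMatching S T) {s t : X} (hs : s ∈ S)
    (ht : t ∈ T) {ε : ℝ} (hε : 0 < ε) :
    ∃ Q : FiniteMatching S T, P.pairs ⊆ Q.pairs ∧ (∃ b, (s, b) ∈ Q.pairs) ∧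
      (∃ a, (a, t) ∈ Q.pairs) ∧
      (∀ x, dist (P.toHomeo x) (Q.toHomeo x) ≤ ε) ∧
      ∀ x, dist (P.toHomeo.symm x) (Q.toHomeo.symm x) ≤ ε := by
  obtain ⟨Q, hPQ, ⟨b, hb⟩, hd, hd'⟩ := P.exists_forth hX hT hs (half_pos hε)
  obtain ⟨R, hQR, ⟨a, ha⟩, he, he'⟩ := Q.swap.exists_forth hX hS ht (half_pos hε)
  have hQR' : Q.pairs ⊆ R.swap.pairs := fun p hp =>
    ⟨p.swap, hQR ⟨p, hp, rfl⟩, Prod.swap_swap p⟩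
  refine ⟨R.swap, hPQ.trans hQR', ⟨b, hQR' hb⟩, ⟨a, (t, a), ha, rfl⟩, fun x => ?_, fun x => ?_⟩
  · have h1 : dist (Q.toHomeo x) (R.swap.toHomeo x) ≤ ε / 2 := he' x
    linarith [dist_triangle (P.toHomeo x) (Q.toHomeo x) (R.swap.toHomeo x), hd x]
  · have h1 : dist (Q.toHomeo.symm x) (R.swap.toHomeo.symm x) ≤ ε / 2 := he x
    linarith [dist_triangle (P.toHomeo.symm x) (Q.toHomeo.symm x) (R.swap.toHomeo.symm x), hd' x]

end FiniteMatching

/-- A strongly locally homogeneous complete metric space is ω-homogeneous. -/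
theorem exists_homeomorph_of_push {X : Type*} [MetricSpace X] [CompleteSpace X] [Nonempty X]
    (hX : ∀ y : X, ∀ N ∈ 𝓝 y, ∃ V ∈ 𝓝 y, ∀ z ∈ V, ∃ g : X ≃ₜ X, g y = z ∧ ∀ x ∉ N, g x = x)
    {S T : Set X} (hScount : S.Countable) (hS : Dense S) (hTcount : T.Countable) (hT : Dense T) :
    ∃ h : X ≃ₜ X, h '' S = T := by
  obtain ⟨s, rfl⟩ := hScount.exists_eq_range hS.nonempty
  obtain ⟨t, rfl⟩ := hTcount.exists_eq_range hT.nonempty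
  choose next hsub hforth hback hd hd' using fun (k : ℕ) (P : FiniteMatching (range s) (range t)) =>
    P.exists_forth_back hX hS hT (mem_range_self k) (mem_range_self k)
      (ε := 1 * (1 / 2) ^ k) (by positivity)
  let P : ℕ → FiniteMatching (range s) (range t) := fun k => Nat.rec
    ⟨Homeomorph.refl X, ∅, finite_empty, fun _ hp => hp.elim, fun _ hp => hp.elim⟩ next k
  have hP : ∀ k, P (k + 1) = next k (P k) := fun _ => rfl
  have hmono : Monotone fun k => (P k).pairs := monotone_nat_of_le_succ fun k => hsub k (P k)
  obtain ⟨H, hH⟩ := exists_limit_homeomorph (fun k => (P k).toHomeo)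
    (fun k x => hd k (P k) x) (fun k x => hd' k (P k) x)
  have hpair : ∀ k, ∀ p ∈ (P k).pairs, H p.1 = p.2 := by
    intro k p hp
    refine tendsto_nhds_unique (hH p.1) (tendsto_const_nhds.congr' ?_)
    filter_upwards [eventually_ge_atTop k] with m hm
    exact ((P m).map p (hmono hm hp)).symm
  refine ⟨H, Subset.antisymm ?_ ?_⟩
  · rintro _ ⟨_, ⟨k, rfl⟩, rfl⟩
    obtain ⟨b, hb⟩ := hforth k (P k)
    rw [← hP k] at hb
    rw [show H (s k) = b from hpair (k + 1) (s k, b) hb]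
    exact ((P (k + 1)).mem _ hb).2
  · rintro _ ⟨k, rfl⟩
    obtain ⟨a, ha⟩ := hback k (P k)
    rw [← hP k] at ha
    exact ⟨a, ((P (k + 1)).mem _ ha).1, hpair (k + 1) (a, t k) ha⟩

/-- **Bennett's theorem.** Every nonempty connected topological `n`-manifold with a
countable base (a nonempty, connected, Hausdorff, second-countable topological space
that is a charted space over `ℝⁿ`) is ω-homogeneous: for any two countable dense subsets
`S` and `T` there exists a self-homeomorphism `h` with `h '' S = T`. -/
theorem manifold_omega_homogeneous
    (n : ℕ) (X : Type*) [TopologicalSpace X] [T2Space X] [SecondCountableTopology X]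
    [ChartedSpace (EuclideanSpace ℝ (Fin n)) X] [Nonempty X] [ConnectedSpace X]
    (S T : Set X) (hScount : S.Countable) (hSdense : Dense S)
    (hTcount : T.Countable) (hTdense : Dense T) :
    ∃ h : X ≃ₜ X, h '' S = T := by
  have : LocallyCompactSpace X := ChartedSpace.locallyCompactSpace (EuclideanSpace ℝ (Fin n)) X
  have : PolishSpace X := polishSpace_of_locallyCompact X
  let := TopologicalSpace.upgradeIsCompletelyMetrizable X
  exact exists_homeomorph_of_push
    (exists_push_of_chartedSpace (E := EuclideanSpace ℝ (Fin n)))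
    hScount hSdense hTcount hTdense
end

section
/- (Commutative form of Corollary 2.6.) For every homeomorphism h : 𝒰 → 𝒰 of the Hilbert cube, the pullback automorphism f ↦ f ∘ h of the C*-algebra C(𝒰, ℂ) is connected to the identity by a homotopy of unital *-homomorphisms: there exists a unital star-algebra homomorphism Ψ : C(𝒰, ℂ) → C([0,1] × 𝒰, ℂ) over ℂ such that for every f ∈ C(𝒰, ℂ) and x ∈ 𝒰, Ψ(f)(0, x) = f(x) and Ψ(f)(1, x) = f(h(x)). -/
/-- The coordinatewise straight-line homotopy `(t, x) ↦ (1 - t) x + t h(x)` from the identity to a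
continuous self-map `h` of the Hilbert cube; it stays in the cube because `[0,1]` is convex. -/
def straightLineHomotopy (h : C(HilbertCube, HilbertCube)) :
    C(unitInterval × HilbertCube, HilbertCube) where
  toFun p n := ⟨(1 - (p.1 : ℝ)) * (p.2 n : ℝ) + (p.1 : ℝ) * (h p.2 n : ℝ),
    convex_Icc (0 : ℝ) 1 (p.2 n).2 (h p.2 n).2 (sub_nonneg.2 p.1.2.2) p.1.2.1 (by ring)⟩
  continuous_toFun := by fun_prop

/-- For every self-homeomorphism `h` of the Hilbert cube `𝒰`, the pullback automorphism
`f ↦ f ∘ h` of `C(𝒰, ℂ)` is connected to the identity by a homotopy of unital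
*-homomorphisms: there is a unital star-algebra homomorphism
`Ψ : C(𝒰, ℂ) → C([0,1] × 𝒰, ℂ)` with `Ψ f (0, x) = f x` and `Ψ f (1, x) = f (h x)`. -/
theorem pullback_automorphism_homotopic_to_id
    (h : HilbertCube ≃ₜ HilbertCube) :
    ∃ Ψ : C(HilbertCube, ℂ) →⋆ₐ[ℂ] C(unitInterval × HilbertCube, ℂ),
      ∀ (f : C(HilbertCube, ℂ)) (x : HilbertCube),
        Ψ f (0, x) = f x ∧ Ψ f (1, x) = f (h x) := by
  -- Precomposition with the straight-line homotopy from the identity to `h`.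
  refine ⟨ContinuousMap.compStarAlgHom' ℂ ℂ (straightLineHomotopy ⟨h, h.continuous⟩),
    fun f x => ⟨congrArg f ?_, congrArg f ?_⟩⟩ <;>
  · funext n
    apply Subtype.ext
    simp [straightLineHomotopy]
end

section
/- (Homotopic half flip for C(𝒰).) The two coordinate-inclusion *-homomorphisms from C(𝒰, ℂ) to C(𝒰 × 𝒰, ℂ), namely f ↦ ((x,y) ↦ f(x)) and f ↦ ((x,y) ↦ f(y)), are homotopic: there exists a unital star-algebra homomorphism Ψ : C(𝒰, ℂ) → C([0,1] × (𝒰 × 𝒰), ℂ) over ℂ such that for every f ∈ C(𝒰, ℂ) and (x,y) ∈ 𝒰 × 𝒰, Ψ(f)(0, (x,y)) = f(x) and Ψ(f)(1, (x,y)) = f(y). -/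
/-- **Homotopic half flip for `C(𝒰)`.** The two coordinate-inclusion *-homomorphisms
`f ↦ ((x,y) ↦ f x)` and `f ↦ ((x,y) ↦ f y)` from `C(𝒰, ℂ)` to `C(𝒰 × 𝒰, ℂ)` are
homotopic: there is a unital star-algebra homomorphism
`Ψ : C(𝒰, ℂ) → C([0,1] × (𝒰 × 𝒰), ℂ)` with `Ψ f (0, (x, y)) = f x` and
`Ψ f (1, (x, y)) = f y`. -/
theorem hilbertCube_homotopic_half_flip :
    ∃ Ψ : C(HilbertCube, ℂ) →⋆ₐ[ℂ] C(unitInterval × (HilbertCube × HilbertCube), ℂ),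
      ∀ (f : C(HilbertCube, ℂ)) (x y : HilbertCube),
        Ψ f (0, (x, y)) = f x ∧ Ψ f (1, (x, y)) = f y := by
  -- `Ψ` is precomposition with the coordinatewise straight-line homotopy from the first
  -- projection `𝒰 × 𝒰 → 𝒰` to the second.
  let H : C(unitInterval × (HilbertCube × HilbertCube), HilbertCube) :=
    { toFun := fun p n => Set.Icc.convexComb (p.2.1 n) (p.2.2 n) p.1
      continuous_toFun := by
        refine continuous_pi fun n => Continuous.subtype_mk ?_ _
        fun_prop }
  refine ⟨H.compStarAlgHom' ℂ ℂ, fun f x y => ⟨congrArg f ?_, congrArg f ?_⟩⟩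
  · funext n
    ext
    simp [H]
  · funext n
    ext
    simp [H]
end
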